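/- arXiv:1611.05285 — 2 statements merged into one kernel-verified Lean document; each statement's English description precedes it below -/
import Mathlib

section
/- Let α ∈ (−1/2, 1/2) and k ∈ (−cos(πα), cos(πα)) with (α, k) ≠ (0, 0). Set s₁ = −sin(πα) − ik, ν = −(1/(2πi))·ln(cos²(πα) − k²) (purely imaginary), d = (1/√π)·√(−ln(cos²(πα) − k²)), and φ = −(3/2)d²·ln 2 + arg Γ((i/2)d²) − π/4 − arg(−sin(πα) − ik). Then for every y > 0: 2·Re[ (√π·e^{−iπν/2}/(s₁·Γ(ν)))·exp( i(2/3)y^{3/2} + ν·ln(8y^{3/2}) − iπ/4 ) ] = d·cos( (2/3)y^{3/2} − (3/4)d²·ln(y) + φ ). -/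
/- STATEMENT 14: the trigonometric identity converting the Riemann–Hilbert asymptotic
expression into the cosine form of the real Ablowitz–Segur connection formulas. -/

open Complex

noncomputable section

/-!
Put `t = d² / 2`, so that `ν = -it` and `Γ(ν)` is the conjugate of `Γ(it)`. Every exponential in the
bracket then has a real or purely imaginary exponent, and the phase of the bracket is the argument
of the cosine. Its modulus is `d / 2`, because `1 - |s₁|² = cos² (πα) - k² = exp (-2πt)` and, by the
reflection formula, `|Γ(it)|² = π / (t sinh (πt))`.
-/

namespace AblowitzSegur

open scoped Real ComplexConjugate

theorem norm_Gamma_I_mul_sq {t : ℝ} (ht : t ≠ 0) :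
    ‖Gamma (I * t)‖ ^ 2 = π / (t * Real.sinh (π * t)) := by
  have hIt : -(I * (t : ℂ)) ≠ 0 := by simpa using ht
  have hshift : Gamma (1 - I * t) = -(I * t) * conj (Gamma (I * t)) := by
    rw [← Gamma_conj, map_mul, conj_I, conj_ofReal, neg_mul I, ← Gamma_add_one _ hIt,
      neg_add_eq_sub]
  have hsin : sin (π * (I * t)) = Real.sinh (π * t) * I := by
    rw [mul_left_comm, mul_comm I, sin_mul_I, ofReal_sinh, ofReal_mul]
  have hreflection : -(I * t) * (‖Gamma (I * t)‖ : ℂ) ^ 2 = π / (Real.sinh (π * t) * I) := by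
    rw [← hsin, ← Gamma_mul_Gamma_one_sub, hshift, mul_left_comm, mul_conj']
  have hsinh : Real.sinh (π * t) ≠ 0 := by simp [Real.pi_ne_zero, ht]
  rw [eq_div_iff (mul_ne_zero (ofReal_ne_zero.mpr hsinh) I_ne_zero)] at hreflection
  rw [eq_div_iff (mul_ne_zero ht hsinh), ← ofReal_inj]
  simp only [ofReal_mul, ofReal_pow]
  linear_combination hreflection + t * ‖Gamma (I * t)‖ ^ 2 * Real.sinh (π * t) * I_sq

theorem one_sub_exp_neg_two_mul (x : ℝ) :
    1 - Real.exp (-(2 * x)) = 2 * Real.exp (-x) * Real.sinh x := by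
  have hcancel : Real.exp (-x) * Real.exp x = 1 := by
    rw [← Real.exp_add, neg_add_cancel, Real.exp_zero]
  have hsq : Real.exp (-(2 * x)) = Real.exp (-x) ^ 2 := by
    rw [← Real.exp_nat_mul, Nat.cast_ofNat, mul_neg]
  rw [Real.sinh_eq]
  linear_combination -hcancel - hsq

theorem sqrt_pi_mul_exp_div_norm_Gamma {r t : ℝ} (hr : 0 ≤ r) (ht : 0 < t)
    (hrt : 1 - r ^ 2 = Real.exp (-(2 * (π * t)))) :
    √π * Real.exp (-(π * t / 2)) / (r * ‖Gamma (I * t)‖) = √(2 * t) / 2 := by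
  have hr_sq : r ^ 2 = 2 * Real.exp (-(π * t)) * Real.sinh (π * t) := by
    rw [← one_sub_exp_neg_two_mul, ← hrt, sub_sub_cancel]
  have hexp_sq : Real.exp (-(π * t / 2)) ^ 2 = Real.exp (-(π * t)) := by
    rw [← Real.exp_nat_mul, Nat.cast_ofNat, mul_neg, mul_div_cancel₀ _ two_ne_zero]
  have hsinh : 0 < Real.sinh (π * t) := Real.sinh_pos_iff.mpr (by positivity)
  rw [← sq_eq_sq₀ (by positivity) (by positivity), div_pow, mul_pow, mul_pow, div_pow,
    Real.sq_sqrt Real.pi_pos.le, Real.sq_sqrt (by positivity), hexp_sq, hr_sq,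
    norm_Gamma_I_mul_sq ht.ne']
  field [hsinh.ne']

theorem re_div_mul_conj_mul_exp (a θ : ℝ) (z w : ℂ) :
    (a / (z * conj w) * exp (θ * I)).re =
      a / (‖z‖ * ‖w‖) * Real.cos (θ + arg w - arg z) := by
  have hpolar : z * conj w = ↑(‖z‖ * ‖w‖) * exp ((arg z - arg w) * I) := by
    conv_lhs => rw [← norm_mul_exp_arg_mul_I z, ← norm_mul_exp_arg_mul_I w]
    rw [map_mul, conj_ofReal, ← exp_conj, map_mul, conj_ofReal, conj_I, mul_mul_mul_comm,
      ← exp_add, ofReal_mul, mul_neg, ← sub_eq_add_neg, ← sub_mul]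
  have hphase : (↑(θ + arg w - arg z) : ℂ) * I = θ * I - (arg z - arg w) * I := by
    push_cast
    ring
  have hquot : a / (z * conj w) * exp (θ * I) =
      ↑(a / (‖z‖ * ‖w‖)) * exp (↑(θ + arg w - arg z) * I) := by
    rw [hpolar, hphase, exp_sub, ofReal_div, div_mul_div_comm, div_mul_eq_mul_div]
  rw [hquot, re_ofReal_mul, exp_ofReal_mul_I_re]

theorem two_mul_re_eq_sqrt_mul_cos {s : ℂ} {t : ℝ} (ht : 0 < t)
    (hst : 1 - ‖s‖ ^ 2 = Real.exp (-(2 * (π * t)))) (x l : ℝ) :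
    2 * ((√π : ℂ) * exp (-(I * π * -(I * t)) / 2) / (s * Gamma (-(I * t))) *
        exp (I * (2 / 3) * x + -(I * t) * l - I * π / 4)).re =
      √(2 * t) * Real.cos (2 / 3 * x - t * l - π / 4 + arg (Gamma (I * t)) - arg s) := by
  have hGamma : Gamma (-(I * t)) = conj (Gamma (I * t)) := by
    rw [← Gamma_conj, map_mul, conj_I, conj_ofReal, neg_mul]
  have hdecay : exp (-(I * π * -(I * t)) / 2) = ↑(Real.exp (-(π * t / 2))) := by
    rw [ofReal_exp]
    congr 1
    push_cast
    linear_combination (π * t / 2 : ℂ) * I_sq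
  have hphase : I * (2 / 3) * x + -(I * t) * l - I * π / 4 =
      ↑(2 / 3 * x - t * l - π / 4) * I := by
    push_cast
    ring
  rw [hGamma, hdecay, hphase, ← ofReal_mul, re_div_mul_conj_mul_exp,
    sqrt_pi_mul_exp_div_norm_Gamma (norm_nonneg s) ht hst, ← mul_assoc,
    mul_div_cancel₀ _ two_ne_zero]

theorem exists_pos_eq_exp_neg_two_pi_mul {u : ℝ} (hu₀ : 0 < u) (hu₁ : u < 1) :
    ∃ t : ℝ, 0 < t ∧ u = Real.exp (-(2 * (π * t))) := by
  refine ⟨-Real.log u / (2 * π), div_pos (neg_pos.mpr (Real.log_neg hu₀ hu₁)) Real.two_pi_pos, ?_⟩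
  rw [← mul_assoc, mul_div_cancel₀ _ Real.two_pi_pos.ne', neg_neg, Real.exp_log hu₀]

theorem one_div_sqrt_pi_mul_sqrt_pi_mul (x : ℝ) : 1 / √π * √(π * x) = √x := by
  rw [Real.sqrt_mul Real.pi_pos.le, ← mul_assoc,
    one_div_mul_cancel (Real.sqrt_ne_zero'.mpr Real.pi_pos), one_mul]

theorem log_eight_mul_rpow_three_halves {y : ℝ} (hy : 0 < y) :
    Real.log (8 * y ^ (3 / 2 : ℝ)) = 3 * Real.log 2 + 3 / 2 * Real.log y := by
  rw [Real.log_mul (by norm_num) (by positivity), Real.log_rpow hy,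
    show (8 : ℝ) = 2 ^ 3 by norm_num, Real.log_pow, Nat.cast_ofNat]

theorem norm_neg_ofReal_sub_I_mul_sq (a b : ℝ) : ‖-(a : ℂ) - I * b‖ ^ 2 = a ^ 2 + b ^ 2 := by
  have h : -(a : ℂ) - I * b = ↑(-a) + ↑(-b) * I := by
    push_cast
    ring
  rw [h, Complex.sq_norm, normSq_add_mul_I, neg_sq, neg_sq]

theorem cos_pi_mul_sq_sub_sq_lt_one {α k : ℝ} (hα : -1 / 2 < α ∧ α < 1 / 2)
    (hne : ¬(α = 0 ∧ k = 0)) : Real.cos (π * α) ^ 2 - k ^ 2 < 1 := by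
  rw [Real.cos_sq', sub_sub]
  refine sub_lt_self 1 ?_
  rcases not_and_or.mp hne with hα₀ | hk₀
  · have hsin : Real.sin (π * α) ≠ 0 := by
      rw [Ne, Real.sin_eq_zero_iff_of_lt_of_lt (by nlinarith [Real.pi_pos, hα.1])
        (by nlinarith [Real.pi_pos, hα.2])]
      exact mul_ne_zero Real.pi_ne_zero hα₀
    positivity
  · positivity

end AblowitzSegur

open AblowitzSegur

/-- Let α ∈ (−1/2, 1/2), k ∈ (−cos πα, cos πα), (α,k) ≠ (0,0), s₁ = −sin(πα) − ik,
ν = −(1/(2πi))ln(cos²(πα) − k²), d = (1/√π)√(−ln(cos²(πα) − k²)) and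
φ = −(3/2)d²ln2 + arg Γ((i/2)d²) − π/4 − arg(−sin(πα) − ik). Then for every y > 0,
2·Re[ (√π e^{−iπν/2}/(s₁Γ(ν)))·e^{ i(2/3)y^{3/2} + ν ln(8y^{3/2}) − iπ/4 } ]
  = d·cos( (2/3)y^{3/2} − (3/4)d²·ln y + φ ). -/
theorem real_AS_connection_identity (α k : ℝ)
    (hα : -1/2 < α ∧ α < 1/2)
    (hk : -Real.cos (Real.pi * α) < k ∧ k < Real.cos (Real.pi * α))
    (hne : ¬(α = 0 ∧ k = 0))
    (s₁ : ℂ) (hs₁ : s₁ = -(Real.sin (Real.pi * α) : ℂ) - Complex.I * (k : ℂ))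
    (ν : ℂ) (hν : ν = -(1 / (2 * (Real.pi : ℂ) * Complex.I)) *
      ((Real.log (Real.cos (Real.pi * α) ^ 2 - k ^ 2) : ℝ) : ℂ))
    (d φ : ℝ)
    (hd : d = (1 / Real.sqrt Real.pi) *
      Real.sqrt (-Real.log (Real.cos (Real.pi * α) ^ 2 - k ^ 2)))
    (hφ : φ = -(3/2) * d ^ 2 * Real.log 2 +
      Complex.arg (Complex.Gamma (Complex.I / 2 * (d : ℂ) ^ 2)) - Real.pi / 4 -
      Complex.arg (-(Real.sin (Real.pi * α) : ℂ) - Complex.I * (k : ℂ))) :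
    ∀ y : ℝ, 0 < y →
      2 * (((Real.sqrt Real.pi : ℂ) * Complex.exp (-(Complex.I * (Real.pi : ℂ) * ν) / 2) /
          (s₁ * Complex.Gamma ν) *
          Complex.exp (Complex.I * (2/3) * ((y ^ ((3:ℝ)/2) : ℝ) : ℂ)
            + ν * ((Real.log (8 * y ^ ((3:ℝ)/2)) : ℝ) : ℂ)
            - Complex.I * (Real.pi : ℂ) / 4)).re) =
        d * Real.cos ((2/3) * y ^ ((3:ℝ)/2) - (3/4) * d ^ 2 * Real.log y + φ) := by
  intro y hy
  obtain ⟨t, ht, hut⟩ := exists_pos_eq_exp_neg_two_pi_mul (sub_pos.mpr (sq_lt_sq' hk.1 hk.2))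
    (cos_pi_mul_sq_sub_sq_lt_one hα hne)
  rw [hut, Real.log_exp] at hν hd
  have hst : 1 - ‖s₁‖ ^ 2 = Real.exp (-(2 * (Real.pi * t))) := by
    rw [← hut, hs₁, norm_neg_ofReal_sub_I_mul_sq, Real.cos_sq', sub_sub]
  have hνt : ν = -(I * t) := by
    rw [hν]
    push_cast
    field_simp
    rw [I_sq, neg_one_mul, neg_neg]
  have hdt : d = √(2 * t) := by
    rw [hd, neg_neg, mul_left_comm, one_div_sqrt_pi_mul_sqrt_pi_mul]
  have hd_sq : d ^ 2 = 2 * t := by rw [hdt, Real.sq_sqrt (by positivity)]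
  have hIt : I / 2 * (d : ℂ) ^ 2 = I * t := by
    rw [← ofReal_pow, hd_sq, ofReal_mul, ofReal_ofNat, ← mul_assoc, div_mul_cancel₀ _ two_ne_zero]
  rw [hνt, two_mul_re_eq_sqrt_mul_cos ht hst, ← hdt, log_eight_mul_rpow_three_halves hy, hφ, ← hs₁,
    hIt, hd_sq]
  congr 2
  ring
end
end

section
/- Let a, b ∈ ℝ with (a, b) ≠ (0, 0), and set α = i·a, k = i·b, s₁ = −sin(πα) − ik = b − i·sinh(πa), ν = −(1/(2πi))·ln(cosh²(πa) + b²) (purely imaginary), d = (i/√π)·√(ln(cosh²(πa) + b²)) (purely imaginary, with d² real and nonpositive), and φ = −(3/2)d²·ln 2 + arg Γ((i/2)d²) − π/4 − arg(b − i·sinh(πa)). Then for every y > 0: 2i·Im[ (√π·e^{−iπν/2}/(s₁·Γ(ν)))·exp( i(2/3)y^{3/2} + ν·ln(8y^{3/2}) − iπ/4 ) ] = d·sin( (2/3)y^{3/2} − (3/4)d²·ln(y) + φ ). -/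
/- STATEMENT 15: the trigonometric identity converting the Riemann–Hilbert asymptotic
expression into the sine form of the purely imaginary Ablowitz–Segur connection formulas. -/

open Complex

noncomputable section

/-!
Put `β = log (1 + |s₁|²) / (2π)`, so that `ν = iβ` and `d² = -2β`. All factors of the
Riemann–Hilbert term except `√π`, `exp (-iπν/2) = exp (πβ/2)`, `1 / s₁` and `1 / Γ(ν)` are
unimodular. The reflection formula gives `|Γ(iβ)|² = π / (β sinh (πβ))`, and
`2 exp (πβ) sinh (πβ) = exp (2πβ) - 1 = |s₁|²`, so the modulus of the term is exactly
`√(β/2) = |d|/2`. Its argument is the phase of the sine.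
-/

section General

open scoped Real ComplexConjugate

lemma exp_mul_sinh (x : ℝ) : Real.exp x * Real.sinh x = (Real.exp (2 * x) - 1) / 2 := by
  rw [Real.sinh_eq, ← mul_div_assoc, mul_sub, ← Real.exp_add, ← Real.exp_add, ← two_mul,
    add_neg_cancel, Real.exp_zero]

lemma norm_Gamma_ofReal_mul_I_sq {t : ℝ} (ht : t ≠ 0) :
    ‖Gamma (t * I)‖ ^ 2 = π / (t * Real.sinh (π * t)) := by
  have hz : -(t * I : ℂ) ≠ 0 := by simp [ht]
  have h_conj : Gamma (-(t * I)) = conj (Gamma (t * I)) := by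
    rw [← Gamma_conj]; simp
  have h_sin : sin (π * (t * I)) = Real.sinh (π * t) * I := by
    rw [← mul_assoc, sin_mul_I]; push_cast; rfl
  have h_sinh : (Real.sinh (π * t) : ℂ) ≠ 0 := by
    exact_mod_cast Real.sinh_ne_zero.mpr (mul_ne_zero Real.pi_ne_zero ht)
  have h_refl := Gamma_mul_Gamma_one_sub (t * I)
  rw [sub_eq_neg_add, Gamma_add_one _ hz, h_conj, mul_left_comm, mul_conj', h_sin,
    eq_div_iff (mul_ne_zero h_sinh I_ne_zero)] at h_refl
  rw [eq_div_iff (mul_ne_zero ht (by exact_mod_cast h_sinh))]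
  have h_prod : (‖Gamma (t * I)‖ : ℂ) ^ 2 * (t * Real.sinh (π * t)) = π := by
    linear_combination h_refl + (‖Gamma (t * I)‖ : ℂ) ^ 2 * t * Real.sinh (π * t) * I_sq
  exact_mod_cast h_prod

lemma mul_conj_eq_norm_mul_exp_arg (z w : ℂ) :
    z * conj w = (‖z‖ * ‖w‖ : ℝ) * exp ((arg z - arg w : ℝ) * I) := by
  conv_lhs => rw [← norm_mul_exp_arg_mul_I z, ← norm_mul_exp_arg_mul_I w]
  rw [map_mul, conj_ofReal, ← exp_conj, map_mul, conj_ofReal, conj_I, mul_mul_mul_comm,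
    ← exp_add]
  push_cast
  ring_nf

lemma log_eight_mul_rpow {y : ℝ} (hy : 0 < y) (r : ℝ) :
    Real.log (8 * y ^ r) = 3 * Real.log 2 + r * Real.log y := by
  rw [Real.log_mul (by norm_num) (Real.rpow_pos_of_pos hy r).ne', Real.log_rpow hy,
    show (8 : ℝ) = 2 ^ 3 by norm_num, Real.log_pow, Nat.cast_ofNat]

end General

namespace AblowitzSegur

open scoped Real ComplexConjugate

/-- The real number `β` with `ν = iβ` for the Stokes multiplier `s`, and hence `d² = -2β`. -/
def exponent (s : ℂ) : ℝ := Real.log (1 + ‖s‖ ^ 2) / (2 * π)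

/-- The large-`y` oscillatory term that the Riemann–Hilbert analysis attaches to the Stokes
multiplier `s` and the parabolic cylinder index `ν`. -/
def oscillatoryTerm (s ν : ℂ) (y : ℝ) : ℂ :=
  √π * exp (-(I * π * ν) / 2) / (s * Gamma ν) *
    exp (I * (2/3) * (y ^ ((3:ℝ)/2) : ℝ) + ν * (Real.log (8 * y ^ ((3:ℝ)/2)) : ℝ) - I * π / 4)

/-- The argument of the sine in the connection formula, with `d²` replaced by
`-2 * exponent s`. The gamma function is evaluated at `(i/2)d²`, which is `-ν` and not `ν`. -/
def phase (s : ℂ) (y : ℝ) : ℝ :=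
  2/3 * y ^ ((3:ℝ)/2) + exponent s * (3 * Real.log 2 + 3/2 * Real.log y) - π / 4 +
    arg (Gamma ((-exponent s : ℝ) * I)) - arg s

variable {s : ℂ}

lemma exponent_pos (hs : s ≠ 0) : 0 < exponent s :=
  div_pos (Real.log_pos (lt_add_of_pos_right 1 (by positivity))) Real.two_pi_pos

lemma exponent_nonneg (s : ℂ) : 0 ≤ exponent s :=
  div_nonneg (Real.log_nonneg (le_add_of_nonneg_right (by positivity))) Real.two_pi_pos.le

lemma log_one_add_norm_sq (s : ℂ) : Real.log (1 + ‖s‖ ^ 2) = 2 * π * exponent s :=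
  (mul_div_cancel₀ _ Real.two_pi_pos.ne').symm

lemma exp_mul_sinh_pi_mul_exponent (s : ℂ) :
    Real.exp (π * exponent s) * Real.sinh (π * exponent s) = ‖s‖ ^ 2 / 2 := by
  rw [exp_mul_sinh, ← mul_assoc, ← log_one_add_norm_sq, Real.exp_log (by positivity),
    add_sub_cancel_left]

lemma sqrt_pi_mul_exp_div_norm_mul_norm_Gamma (hs : s ≠ 0) :
    √π * Real.exp (π * exponent s / 2) / (‖s‖ * ‖Gamma ((-exponent s : ℝ) * I)‖) =
      √(exponent s / 2) := by
  have hβ := exponent_pos hs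
  have h_exp : Real.exp (π * exponent s / 2) ^ 2 = Real.exp (π * exponent s) := by
    rw [← Real.exp_nat_mul, Nat.cast_ofNat, mul_div_cancel₀ _ two_ne_zero]
  symm
  rw [Real.sqrt_eq_iff_eq_sq (by positivity) (by positivity), div_pow, mul_pow, mul_pow,
    Real.sq_sqrt Real.pi_pos.le, h_exp, norm_Gamma_ofReal_mul_I_sq (neg_ne_zero.mpr hβ.ne'),
    mul_neg, Real.sinh_neg, neg_mul_neg]
  have h_norm : ‖s‖ ^ 2 = 2 * (Real.exp (π * exponent s) * Real.sinh (π * exponent s)) := by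
    rw [exp_mul_sinh_pi_mul_exponent, mul_div_cancel₀ _ two_ne_zero]
  rw [h_norm]
  field_simp

lemma oscillatoryTerm_I_mul_exponent (hs : s ≠ 0) {y : ℝ} (hy : 0 < y) :
    oscillatoryTerm s (I * exponent s) y = √(exponent s / 2) * exp (phase s y * I) := by
  have h_conj : Gamma (I * exponent s) = conj (Gamma ((-exponent s : ℝ) * I)) := by
    rw [← Gamma_conj]; simp [mul_comm]
  have h_modulus : exp (-(I * π * (I * exponent s)) / 2) = Real.exp (π * exponent s / 2) := by
    push_cast
    congr 1
    linear_combination -(π * exponent s / 2 : ℂ) * I_sq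
  have h_argument :
      exp (I * (2/3) * (y ^ ((3:ℝ)/2) : ℝ) +
          I * exponent s * (3 * Real.log 2 + 3/2 * Real.log y : ℝ) - I * π / 4) =
        exp (phase s y * I) * exp ((arg s - arg (Gamma ((-exponent s : ℝ) * I)) : ℝ) * I) := by
    rw [← exp_add, phase]
    push_cast
    ring_nf
  rw [oscillatoryTerm, h_conj, mul_conj_eq_norm_mul_exp_arg, h_modulus, log_eight_mul_rpow hy,
    h_argument, ← sqrt_pi_mul_exp_div_norm_mul_norm_Gamma hs]
  push_cast
  field_simp

lemma two_mul_I_mul_im_oscillatoryTerm (hs : s ≠ 0) {y : ℝ} (hy : 0 < y) :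
    2 * I * (oscillatoryTerm s (I * exponent s) y).im =
      2 * I * √(exponent s / 2) * sin (phase s y) := by
  rw [oscillatoryTerm_I_mul_exponent hs hy, im_ofReal_mul, exp_ofReal_mul_I_im]
  push_cast
  ring

lemma neg_one_div_two_pi_I_mul_log (s : ℂ) :
    -(1 / (2 * π * I)) * Real.log (1 + ‖s‖ ^ 2) = I * exponent s := by
  rw [log_one_add_norm_sq]
  push_cast
  field_simp
  simp

lemma I_div_sqrt_pi_mul_sqrt_log (s : ℂ) :
    I / √π * √(Real.log (1 + ‖s‖ ^ 2)) = 2 * I * √(exponent s / 2) := by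
  have h_ratio : √(Real.log (1 + ‖s‖ ^ 2)) / √π = 2 * √(exponent s / 2) := by
    rw [log_one_add_norm_sq, ← Real.sqrt_div' _ Real.pi_pos.le,
      show 2 * π * exponent s / π = 2 ^ 2 * (exponent s / 2) by field_simp,
      Real.sqrt_mul (by positivity), Real.sqrt_sq zero_le_two]
  rw [div_mul_eq_mul_div, mul_div_assoc, ← ofReal_div, h_ratio]
  push_cast
  ring

lemma sq_two_mul_I_mul_sqrt (s : ℂ) :
    (2 * I * √(exponent s / 2)) ^ 2 = (-2 * exponent s : ℂ) := by
  rw [mul_pow, mul_pow, I_sq, ← ofReal_pow,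
    Real.sq_sqrt (div_nonneg (exponent_nonneg s) zero_le_two)]
  push_cast
  ring

lemma neg_sin_pi_mul_I_mul_sub (a b : ℝ) :
    -sin (π * (I * a)) - I * (I * b) = b - I * Real.sinh (π * a) := by
  rw [← mul_assoc I I, I_mul_I, mul_comm I (a : ℂ), ← mul_assoc, sin_mul_I]
  push_cast
  ring

lemma one_add_norm_sub_I_mul_sinh_sq (x b : ℝ) :
    1 + ‖(b - I * Real.sinh x : ℂ)‖ ^ 2 = Real.cosh x ^ 2 + b ^ 2 := by
  rw [mul_comm I, sub_eq_add_neg, ← neg_mul, ← ofReal_neg, ← normSq_eq_norm_sq,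
    normSq_add_mul_I, Real.cosh_sq]
  ring

lemma sub_I_mul_sinh_pi_ne_zero {a b : ℝ} (hne : ¬(a = 0 ∧ b = 0)) :
    (b - I * Real.sinh (π * a) : ℂ) ≠ 0 := by
  intro h
  have h_re : b = 0 := by simpa [-ofReal_sinh] using congrArg re h
  have h_im : a = 0 := by simpa [-ofReal_sinh, Real.pi_ne_zero] using congrArg im h
  exact hne ⟨h_im, h_re⟩

end AblowitzSegur

/-- Let a, b ∈ ℝ with (a,b) ≠ (0,0), α = ia, k = ib, s₁ = −sin(πα) − ik = b − i·sinh(πa),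
ν = −(1/(2πi))ln(cosh²(πa) + b²), d = (i/√π)√(ln(cosh²(πa) + b²)) and
φ = −(3/2)d²ln2 + arg Γ((i/2)d²) − π/4 − arg(b − i·sinh(πa)). Then for every y > 0,
2i·Im[ (√π e^{−iπν/2}/(s₁Γ(ν)))·e^{ i(2/3)y^{3/2} + ν ln(8y^{3/2}) − iπ/4 } ]
  = d·sin( (2/3)y^{3/2} − (3/4)d²·ln y + φ ). -/
theorem imaginary_AS_connection_identity (a b : ℝ)
    (hne : ¬(a = 0 ∧ b = 0))
    (α k : ℂ) (hα : α = Complex.I * (a : ℂ)) (hk : k = Complex.I * (b : ℂ))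
    (s₁ : ℂ) (hs₁ : s₁ = -Complex.sin ((Real.pi : ℂ) * α) - Complex.I * k)
    (ν : ℂ) (hν : ν = -(1 / (2 * (Real.pi : ℂ) * Complex.I)) *
      ((Real.log (Real.cosh (Real.pi * a) ^ 2 + b ^ 2) : ℝ) : ℂ))
    (d φ : ℂ)
    (hd : d = (Complex.I / (Real.sqrt Real.pi : ℂ)) *
      ((Real.sqrt (Real.log (Real.cosh (Real.pi * a) ^ 2 + b ^ 2)) : ℝ) : ℂ))
    (hφ : φ = -(3/2) * d ^ 2 * ((Real.log 2 : ℝ) : ℂ) +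
      ((Complex.arg (Complex.Gamma (Complex.I / 2 * d ^ 2)) : ℝ) : ℂ) - (Real.pi : ℂ) / 4 -
      ((Complex.arg ((b : ℂ) - Complex.I * ((Real.sinh (Real.pi * a) : ℝ) : ℂ)) : ℝ) : ℂ)) :
    ∀ y : ℝ, 0 < y →
      2 * Complex.I * ((((Real.sqrt Real.pi : ℂ) *
          Complex.exp (-(Complex.I * (Real.pi : ℂ) * ν) / 2) / (s₁ * Complex.Gamma ν) *
          Complex.exp (Complex.I * (2/3) * ((y ^ ((3:ℝ)/2) : ℝ) : ℂ)
            + ν * ((Real.log (8 * y ^ ((3:ℝ)/2)) : ℝ) : ℂ)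
            - Complex.I * (Real.pi : ℂ) / 4)).im : ℝ) ) =
        d * Complex.sin ((((2/3) * y ^ ((3:ℝ)/2) : ℝ) : ℂ)
          - (3/4) * d ^ 2 * ((Real.log y : ℝ) : ℂ) + φ) := by
  intro y hy
  rw [hα, hk, AblowitzSegur.neg_sin_pi_mul_I_mul_sub] at hs₁
  have hs₁_ne : s₁ ≠ 0 := hs₁ ▸ AblowitzSegur.sub_I_mul_sinh_pi_ne_zero hne
  rw [← AblowitzSegur.one_add_norm_sub_I_mul_sinh_sq, ← hs₁] at hν hd
  rw [AblowitzSegur.neg_one_div_two_pi_I_mul_log] at hν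
  rw [AblowitzSegur.I_div_sqrt_pi_mul_sqrt_log] at hd
  have hd_sq : d ^ 2 = -2 * AblowitzSegur.exponent s₁ :=
    hd ▸ AblowitzSegur.sq_two_mul_I_mul_sqrt s₁
  have h_Gamma : I / 2 * d ^ 2 = (-AblowitzSegur.exponent s₁ : ℝ) * I := by
    rw [hd_sq]; push_cast; ring
  have h_phase : ((2/3 * y ^ ((3:ℝ)/2) : ℝ) : ℂ) - 3/4 * d ^ 2 * (Real.log y : ℝ) + φ =
      AblowitzSegur.phase s₁ y := by
    rw [hφ, h_Gamma, ← hs₁, hd_sq, AblowitzSegur.phase]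
    push_cast
    ring
  rw [h_phase, hd, hν]
  exact AblowitzSegur.two_mul_I_mul_im_oscillatoryTerm hs₁_ne hy
end
end
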